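/- Let A and U be nonempty sets with the discrete topology, let X ⊆ A^ℤ be a right-finite shift space, and let Ψ : X → U^ℤ be an extended sliding block code of finite degree. Assume that for every sequence (x^k)_{k≥1} in X with Ψ(x^k) → y in U^ℤ there exist a sequence of A-valued functions (h_ℓ)_{ℓ≥0} on finite subsets of ℤ with h_{ℓ+1} extending h_ℓ, and a decreasing sequence (S_ℓ)_{ℓ≥0} of infinite subsets of ℕ, such that for every ℓ ≥ 0 one has x^k ∈ C_X(h_ℓ) for all k ∈ S_ℓ and Ψ(z)_j = y_j for every z ∈ C_X(h_ℓ) and |j| ≤ ℓ, and moreover the set D = ⋃_{ℓ≥0} dom(h_ℓ) is unbounded below in ℤ or bounded above in ℤ (i.e., D is not of the remaining type: bounded below and unbounded above). Then Ψ(X) is a closed subset of U^ℤ, hence a shift space over U. -/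

import Mathlib

open Filter Topology Set

namespace ShiftPaper

/-- The shift map `σ` on the full shift `A^ℤ`: `σ(x)_n = x_{n+1}`. -/
def shiftMap {A : Type*} (x : ℤ → A) : ℤ → A := fun n => x (n + 1)

/-- The `n`-th iterate of the shift: `σ^n(x)_m = x_{m+n}` (for `n : ℤ`). -/
def shiftIter {A : Type*} (n : ℤ) (x : ℤ → A) : ℤ → A := fun m => x (m + n)

/-- A shift space: a nonempty closed shift-invariant subset of the full shift. -/
def IsShiftSpace {A : Type*} [TopologicalSpace A] (X : Set (ℤ → A)) : Prop :=
  X.Nonempty ∧ IsClosed X ∧ shiftMap '' X = X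

/-- The cylinder in `X` determined by the finite set `s ⊆ ℤ` and the values of `h` on `s`:
`C_X(h) = X ∩ {x : x_i = h_i for all i ∈ s}`. -/
def cylX {A : Type*} (X : Set (ℤ → A)) (s : Finset ℤ) (h : ℤ → A) : Set (ℤ → A) :=
  X ∩ {x | ∀ i ∈ s, x i = h i}

/-- A barrier on `X`: a partition of `X` all of whose members are nonempty cylinders in `X`. -/
def IsBarrier {A : Type*} (X : Set (ℤ → A)) (B : Set (Set (ℤ → A))) : Prop :=
  (∀ C ∈ B, C.Nonempty ∧ ∃ (s : Finset ℤ) (h : ℤ → A), C = cylX X s h) ∧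
  (∀ x ∈ X, ∃! C, C ∈ B ∧ x ∈ C)

/-- `Ψ` is induced by the local rule `φ` on the barrier `B`:
`Ψ(x)_n = φ(C)` whenever `C ∈ B` contains `σ^n(x)`. -/
def InducedBy {A U : Type*} (X : Set (ℤ → A)) (Ψ : (ℤ → A) → ℤ → U)
    (B : Set (Set (ℤ → A))) (φ : Set (ℤ → A) → U) : Prop :=
  ∀ x ∈ X, ∀ n : ℤ, ∀ C ∈ B, shiftIter n x ∈ C → Ψ x n = φ C

/-- `Ψ` is an extended sliding block code on `X`. -/
def IsESBC {A U : Type*} (X : Set (ℤ → A)) (Ψ : (ℤ → A) → ℤ → U) : Prop :=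
  ∃ (B : Set (Set (ℤ → A))) (φ : Set (ℤ → A) → U), IsBarrier X B ∧ InducedBy X Ψ B φ

/-- `Ψ` is an extended sliding block code of finite degree: it is induced by a local rule `φ`
on a barrier `B` (so `B` is attached to `Ψ`) such that for each symbol `u` only finitely many
members of `B` have `φ`-value (i.e. `Ψ₀`-value) `u`. -/
def IsFiniteDegreeESBC {A U : Type*} (X : Set (ℤ → A)) (Ψ : (ℤ → A) → ℤ → U) : Prop :=
  ∃ (B : Set (Set (ℤ → A))) (φ : Set (ℤ → A) → U), IsBarrier X B ∧ InducedBy X Ψ B φ ∧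
    ∀ u : U, {C | C ∈ B ∧ φ C = u}.Finite

/-- The data produced by the crucial lemma for a distinguished sequence `x` with
`Ψ(x^k) → y`: a sequence of partial functions `h_ℓ` (with finite domains `s_ℓ`, each
extending the previous one) and a decreasing sequence `S_ℓ` of infinite subsets of `ℕ`,
such that `x^k ∈ C_X(h_ℓ)` for `k ∈ S_ℓ` and `Ψ(z)|_{[-ℓ,ℓ]} = y|_{[-ℓ,ℓ]}` on `C_X(h_ℓ)`. -/
def AssocData {A U : Type*} (X : Set (ℤ → A)) (Ψ : (ℤ → A) → ℤ → U)
    (x : ℕ → ℤ → A) (y : ℤ → U)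
    (s : ℕ → Finset ℤ) (h : ℕ → ℤ → A) (S : ℕ → Set ℕ) : Prop :=
  (∀ ℓ : ℕ, s ℓ ⊆ s (ℓ + 1)) ∧
  (∀ ℓ : ℕ, ∀ i ∈ s ℓ, h (ℓ + 1) i = h ℓ i) ∧
  (∀ ℓ : ℕ, (S ℓ).Infinite) ∧
  (∀ ℓ : ℕ, S (ℓ + 1) ⊆ S ℓ) ∧
  (∀ ℓ : ℕ, ∀ k ∈ S ℓ, x k ∈ cylX X (s ℓ) (h ℓ)) ∧
  (∀ ℓ : ℕ, ∀ z ∈ cylX X (s ℓ) (h ℓ), ∀ j : ℤ, |j| ≤ (ℓ : ℤ) → Ψ z j = y j)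

/-- The symbol `a` belongs to `L₁(X)`: it appears in some point of `X`. -/
def inLetter {A : Type*} (X : Set (ℤ → A)) (a : A) : Prop :=
  ∃ x ∈ X, ∃ i : ℤ, x i = a

/-- The two-letter word `ab` belongs to the language `L(X)`. -/
def inLang2 {A : Type*} (X : Set (ℤ → A)) (a b : A) : Prop :=
  ∃ x ∈ X, ∃ i : ℤ, x i = a ∧ x (i + 1) = b

/-- `X` is right-finite: for each allowed symbol `a`, only finitely many `b` with `ab ∈ L(X)`. -/
def RightFinite {A : Type*} (X : Set (ℤ → A)) : Prop :=
  ∀ a : A, inLetter X a → {b : A | inLang2 X a b}.Finite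

/-- `X` is left-finite: for each allowed symbol `a`, only finitely many `b` with `ba ∈ L(X)`. -/
def LeftFinite {A : Type*} (X : Set (ℤ → A)) : Prop :=
  ∀ a : A, inLetter X a → {b : A | inLang2 X b a}.Finite

end ShiftPaper

open ShiftPaper

/-!
If `Ψ(x^k) → y`, the associated data produce nested nonempty cylinders `C_X(h_ℓ)`, and any point
common to all of them is mapped to `y`. When `D = ⋃ dom(h_ℓ)` is finite, the cylinders are
eventually constant. When `D` is unbounded below, every coordinate `n` lies to the right of some
`d ∈ D`; the symbol at `d` is prescribed on some `C_X(h_ℓ)`, so right-finiteness leaves only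
finitely many symbols at `n`, and a common point exists by compactness.
-/

namespace ShiftPaper

theorem nonempty_iInter_of_directed_of_mapsTo_eval_isCompact {ι κ : Type*} [Nonempty κ]
    {π : ι → Type*} [∀ i, TopologicalSpace (π i)] {C : κ → Set (∀ i, π i)}
    (hdir : Directed (· ⊇ ·) C) (hne : ∀ k, (C k).Nonempty) (hclosed : ∀ k, IsClosed (C k))
    (hcompact : ∀ i, ∃ k, ∃ K, IsCompact K ∧ MapsTo (Function.eval i) (C k) K) :
    (⋂ k, C k).Nonempty := by
  have : (⨅ k, 𝓟 (C k)).NeBot := iInf_neBot_of_directed'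
    (fun k l => (hdir k l).imp fun _ h => h.imp principal_mono.2 principal_mono.2)
    fun k => principal_neBot_iff.2 (hne k)
  let F : Ultrafilter (∀ i, π i) := Ultrafilter.of (⨅ k, 𝓟 (C k))
  have mem_F (k : κ) : C k ∈ F :=
    Ultrafilter.of_le _ (mem_iInf_of_mem k (mem_principal_self (C k)))
  have exists_limit (i : ι) : ∃ a, Tendsto (fun x : ∀ i, π i => x i) F (𝓝 a) := by
    obtain ⟨k, K, hK, hCK⟩ := hcompact i
    have mem_map : K ∈ F.map (Function.eval i) :=
      Ultrafilter.mem_map.2 (mem_of_superset (mem_F k) hCK.subset_preimage)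
    obtain ⟨a, -, ha⟩ := isCompact_iff_ultrafilter_le_nhds.1 hK _ (le_principal_iff.2 mem_map)
    exact ⟨a, ha⟩
  choose a ha using exists_limit
  have tendsto_a : Tendsto id (F : Filter (∀ i, π i)) (𝓝 a) := tendsto_pi_nhds.2 ha
  exact ⟨a, mem_iInter.2 fun k => (hclosed k).mem_of_tendsto tendsto_a (mem_F k)⟩

section Shift

variable {A U : Type*} {X : Set (ℤ → A)} {Ψ : (ℤ → A) → ℤ → U}

theorem shiftIter_zero (x : ℤ → A) : shiftIter 0 x = x :=
  funext fun m => congrArg x (add_zero m)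

theorem shiftIter_shiftMap (n : ℤ) (x : ℤ → A) :
    shiftIter n (shiftMap x) = shiftIter (n + 1) x :=
  funext fun m => congrArg x (add_assoc m n 1)

theorem shiftMap_mem (hX : shiftMap '' X = X) {x : ℤ → A} (hx : x ∈ X) : shiftMap x ∈ X :=
  hX.subset (mem_image_of_mem shiftMap hx)

theorem shiftIter_mem (hX : shiftMap '' X = X) (n : ℤ) {x : ℤ → A} (hx : x ∈ X) :
    shiftIter n x ∈ X := by
  induction n generalizing x with
  | zero => rwa [shiftIter_zero]
  | succ n ih =>
    rw [← shiftIter_shiftMap]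
    exact ih (shiftMap_mem hX hx)
  | pred n ih =>
    obtain ⟨x', hx', rfl⟩ := hX.superset hx
    rw [shiftIter_shiftMap, sub_add_cancel]
    exact ih hx'

theorem IsESBC.eqOn_comp_shiftMap (hΨ : IsESBC X Ψ) (hX : shiftMap '' X = X) :
    EqOn (Ψ ∘ shiftMap) (shiftMap ∘ Ψ) X := by
  obtain ⟨B, φ, hB, hφ⟩ := hΨ
  intro x hx
  funext n
  obtain ⟨C, ⟨hC, hxC⟩, -⟩ := hB.2 _ (shiftIter_mem hX (n + 1) hx)
  calc Ψ (shiftMap x) n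
      = φ C := hφ _ (shiftMap_mem hX hx) n C hC (by rwa [shiftIter_shiftMap])
    _ = Ψ x (n + 1) := (hφ x hx (n + 1) C hC hxC).symm

theorem IsFiniteDegreeESBC.isESBC (hΨ : IsFiniteDegreeESBC X Ψ) : IsESBC X Ψ :=
  let ⟨B, φ, hB, hφ, _⟩ := hΨ
  ⟨B, φ, hB, hφ⟩

theorem IsShiftSpace.image [TopologicalSpace A] [TopologicalSpace U] (hX : IsShiftSpace X)
    (hΨ : EqOn (Ψ ∘ shiftMap) (shiftMap ∘ Ψ) X) (hclosed : IsClosed (Ψ '' X)) :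
    IsShiftSpace (Ψ '' X) := by
  refine ⟨hX.1.image Ψ, hclosed, ?_⟩
  rw [← image_comp, ← hΨ.image_eq, image_comp, hX.2.2]

end Shift

section Cylinder

variable {A : Type*} {X : Set (ℤ → A)}

theorem isClosed_cylX [TopologicalSpace A] [T1Space A] (hX : IsClosed X) (s : Finset ℤ)
    (h : ℤ → A) : IsClosed (cylX X s h) := by
  refine hX.inter ?_
  simp only [ofPred_forall]
  exact isClosed_biInter fun i _ => isClosed_singleton.preimage (continuous_apply i)

theorem cylX_subset_cylX {s t : Finset ℤ} {g h : ℤ → A} (hst : s ⊆ t)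
    (hgh : ∀ i ∈ s, h i = g i) : cylX X t h ⊆ cylX X s g :=
  fun _ hx => ⟨hx.1, fun i hi => (hx.2 i (hst hi)).trans (hgh i hi)⟩

theorem RightFinite.finite_image_eval_of_le (hR : RightFinite X) {Y : Set (ℤ → A)} (hY : Y ⊆ X)
    {d n : ℤ} (hd : (Function.eval d '' Y).Finite) (hdn : d ≤ n) :
    (Function.eval n '' Y).Finite := by
  induction n, hdn using Int.leInduction with
  | base => exact hd
  | succ n _ ih =>
    have followers_finite : (⋃ a ∈ Function.eval n '' Y, {b | inLang2 X a b}).Finite := by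
      refine ih.biUnion ?_
      rintro _ ⟨x, hx, rfl⟩
      exact hR _ ⟨x, hY hx, n, rfl⟩
    refine followers_finite.subset ?_
    rintro _ ⟨x, hx, rfl⟩
    exact mem_biUnion (mem_image_of_mem _ hx) ⟨x, hY hx, n, rfl, rfl⟩

theorem RightFinite.finite_image_eval_cylX (hR : RightFinite X) {s : Finset ℤ} {d n : ℤ}
    (hd : d ∈ s) (hdn : d ≤ n) (h : ℤ → A) : (Function.eval n '' cylX X s h).Finite := by
  refine hR.finite_image_eval_of_le inter_subset_left ((finite_singleton (h d)).subset ?_) hdn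
  rintro _ ⟨x, hx, rfl⟩
  exact hx.2 d hd

variable {κ : Type*} [Nonempty κ] {s : κ → Finset ℤ} {h : κ → ℤ → A}

theorem nonempty_iInter_cylX_of_finite (hdir : Directed (· ⊇ ·) fun k => cylX X (s k) (h k))
    (hne : ∀ k, (cylX X (s k) (h k)).Nonempty) (hD : (⋃ k, (s k : Set ℤ)).Finite) :
    (⋂ k, cylX X (s k) (h k)).Nonempty := by
  have := hD.to_subtype
  choose k hk using fun i : ⋃ k, (s k : Set ℤ) => mem_iUnion.1 i.2
  obtain ⟨m, hm⟩ := hdir.finite_le k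
  obtain ⟨z, hz⟩ := hne m
  refine ⟨z, mem_iInter.2 fun l => ⟨hz.1, fun i hi => ?_⟩⟩
  let j : ⋃ k, (s k : Set ℤ) := ⟨i, mem_iUnion.2 ⟨l, hi⟩⟩
  obtain ⟨n, hnl, hnj⟩ := hdir l (k j)
  obtain ⟨w, hw⟩ := hne n
  calc z i = h (k j) i := (hm j hz).2 i (hk j)
    _ = w i := ((hnj hw).2 i (hk j)).symm
    _ = h l i := (hnl hw).2 i hi

variable [TopologicalSpace A] [T1Space A]

theorem RightFinite.nonempty_iInter_cylX_of_not_bddBelow (hR : RightFinite X) (hX : IsClosed X)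
    (hdir : Directed (· ⊇ ·) fun k => cylX X (s k) (h k))
    (hne : ∀ k, (cylX X (s k) (h k)).Nonempty) (hD : ¬ BddBelow (⋃ k, (s k : Set ℤ))) :
    (⋂ k, cylX X (s k) (h k)).Nonempty := by
  refine nonempty_iInter_of_directed_of_mapsTo_eval_isCompact hdir hne
    (fun k => isClosed_cylX hX (s k) (h k)) fun n => ?_
  obtain ⟨d, hd, hdn⟩ := not_bddBelow_iff.1 hD n
  obtain ⟨k, hdk⟩ := mem_iUnion.1 hd
  exact ⟨k, _, (hR.finite_image_eval_cylX hdk hdn.le (h k)).isCompact, mapsTo_image _ _⟩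

theorem RightFinite.nonempty_iInter_cylX (hR : RightFinite X) (hX : IsClosed X)
    (hdir : Directed (· ⊇ ·) fun k => cylX X (s k) (h k))
    (hne : ∀ k, (cylX X (s k) (h k)).Nonempty)
    (hD : ¬ BddBelow (⋃ k, (s k : Set ℤ)) ∨ BddAbove (⋃ k, (s k : Set ℤ))) :
    (⋂ k, cylX X (s k) (h k)).Nonempty := by
  by_cases hbelow : BddBelow (⋃ k, (s k : Set ℤ))
  · have habove := hD.resolve_left (not_not_intro hbelow)
    exact nonempty_iInter_cylX_of_finite hdir hne
      (finite_iff_bddBelow_bddAbove.2 ⟨hbelow, habove⟩)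
  · exact hR.nonempty_iInter_cylX_of_not_bddBelow hX hdir hne hbelow

end Cylinder

namespace AssocData

variable {A U : Type*} {X : Set (ℤ → A)} {Ψ : (ℤ → A) → ℤ → U} {x : ℕ → ℤ → A} {y : ℤ → U}
  {s : ℕ → Finset ℤ} {h : ℕ → ℤ → A} {S : ℕ → Set ℕ}

theorem antitone_cylX (hA : AssocData X Ψ x y s h S) :
    Antitone fun ℓ => cylX X (s ℓ) (h ℓ) :=
  let ⟨hs, hh, _⟩ := hA
  antitone_nat_of_succ_le fun ℓ => cylX_subset_cylX (hs ℓ) (hh ℓ)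

theorem nonempty_cylX (hA : AssocData X Ψ x y s h S) (ℓ : ℕ) : (cylX X (s ℓ) (h ℓ)).Nonempty :=
  let ⟨_, _, hS, _, hx, _⟩ := hA
  let ⟨k, hk⟩ := (hS ℓ).nonempty
  ⟨x k, hx ℓ k hk⟩

theorem map_eq_of_mem_iInter_cylX (hA : AssocData X Ψ x y s h S) {z : ℤ → A}
    (hz : z ∈ ⋂ ℓ, cylX X (s ℓ) (h ℓ)) : Ψ z = y :=
  let ⟨_, _, _, _, _, hy⟩ := hA
  funext fun j => hy j.natAbs z (mem_iInter.1 hz _) j (Int.abs_eq_natAbs j).le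

theorem mem_image [TopologicalSpace A] [T1Space A] (hA : AssocData X Ψ x y s h S)
    (hX : IsClosed X) (hR : RightFinite X)
    (hD : ¬ BddBelow (⋃ ℓ, (s ℓ : Set ℤ)) ∨ BddAbove (⋃ ℓ, (s ℓ : Set ℤ))) : y ∈ Ψ '' X := by
  obtain ⟨z, hz⟩ :=
    hR.nonempty_iInter_cylX hX hA.antitone_cylX.directed_ge hA.nonempty_cylX hD
  exact ⟨z, (mem_iInter.1 hz 0).1, hA.map_eq_of_mem_iInter_cylX hz⟩

end AssocData

end ShiftPaper

theorem closed_image_right_finite_general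
    {A U : Type*} [TopologicalSpace A] [T1Space A] [TopologicalSpace U] [FirstCountableTopology U]
    (X : Set (ℤ → A)) (hX : IsShiftSpace X) (hR : RightFinite X)
    (Ψ : (ℤ → A) → ℤ → U) (hΨ : EqOn (Ψ ∘ shiftMap) (shiftMap ∘ Ψ) X)
    (hyp : ∀ (x : ℕ → ℤ → A) (y : ℤ → U), (∀ k, x k ∈ X) →
      Tendsto (fun k => Ψ (x k)) atTop (𝓝 y) →
      ∃ (s : ℕ → Finset ℤ) (h : ℕ → ℤ → A) (S : ℕ → Set ℕ),
        AssocData X Ψ x y s h S ∧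
        (¬ BddBelow (⋃ ℓ, (s ℓ : Set ℤ)) ∨ BddAbove (⋃ ℓ, (s ℓ : Set ℤ)))) :
    IsClosed (Ψ '' X) ∧ IsShiftSpace (Ψ '' X) := by
  have image_seqClosed : IsSeqClosed (Ψ '' X) := by
    intro u y hu hlim
    choose x hx hxu using hu
    obtain ⟨s, h, S, hA, hD⟩ := hyp x y hx (by simpa only [hxu] using hlim)
    exact hA.mem_image hX.2.1 hR hD
  exact ⟨image_seqClosed.isClosed, hX.image hΨ image_seqClosed.isClosed⟩

/-- STATEMENT 10 (Theorem 3.5 b) of the paper): a finite degree ESBC on a right-finite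
shift space, such that every distinguished sequence admits associated data whose total
domain `D` is unbounded below or bounded above (classes C1–C4, i.e. not of class C5),
has closed image, hence its image is a shift space. -/
theorem closed_image_right_finite
    {A U : Type*} [TopologicalSpace A] [DiscreteTopology A] [Nonempty A]
    [TopologicalSpace U] [DiscreteTopology U] [Nonempty U]
    (X : Set (ℤ → A)) (hX : IsShiftSpace X)
    (hR : RightFinite X)
    (Ψ : (ℤ → A) → ℤ → U) (hΨ : IsFiniteDegreeESBC X Ψ)
    (hyp : ∀ (x : ℕ → ℤ → A) (y : ℤ → U), (∀ k, x k ∈ X) →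
      Tendsto (fun k => Ψ (x k)) atTop (𝓝 y) →
      ∃ (s : ℕ → Finset ℤ) (h : ℕ → ℤ → A) (S : ℕ → Set ℕ),
        AssocData X Ψ x y s h S ∧
        (¬ BddBelow (⋃ ℓ, (s ℓ : Set ℤ)) ∨ BddAbove (⋃ ℓ, (s ℓ : Set ℤ)))) :
    IsClosed (Ψ '' X) ∧ IsShiftSpace (Ψ '' X) :=
  closed_image_right_finite_general X hX hR Ψ (hΨ.isESBC.eqOn_comp_shiftMap hX.2.2) hyp
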